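/- arXiv:1402.2469 — 5 statements merged into one kernel-verified Lean document; each statement's English description precedes it below -/
import Mathlib

section
/- Let H be the complete s-uniform t-partite hypergraph with sides V_1, …, V_t ordered so that |V_1| ≤ |V_2| ≤ ⋯ ≤ |V_t|, and let I(H) be its edge ideal in R = K[x_v : v ∈ V]. Then the height of I(H) equals |V_1| + |V_2| + ⋯ + |V_{t−s+1}|. -/
open Finset

/-- The vertex set `V = V_1 ∪ ⋯ ∪ V_t` of the multipartite hypergraph with sides `Vs`. -/
def vertexSet {α : Type*} [DecidableEq α] {t : ℕ} (Vs : Fin t → Finset α) : Finset α :=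
  Finset.univ.biUnion Vs

/-- `e` is an edge of the complete `s`-uniform `t`-partite hypergraph with sides `Vs`:
`e ⊆ V`, `|e| = s`, and `|e ∩ V_i| ≤ 1` for every side. -/
def IsEdge {α : Type*} [DecidableEq α] {t : ℕ} (Vs : Fin t → Finset α) (s : ℕ)
    (e : Finset α) : Prop :=
  e ⊆ vertexSet Vs ∧ e.card = s ∧ ∀ i : Fin t, (e ∩ Vs i).card ≤ 1

/-- `F` is an independent set: a subset of `V` containing no edge. -/
def Indep {α : Type*} [DecidableEq α] {t : ℕ} (Vs : Fin t → Finset α) (s : ℕ)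
    (F : Finset α) : Prop :=
  F ⊆ vertexSet Vs ∧ ∀ e : Finset α, IsEdge Vs s e → ¬ e ⊆ F

/-- The edge ideal `I(H) = (∏_{v ∈ e} x_v : e ∈ E(H))` of the complete `s`-uniform
`t`-partite hypergraph, in the polynomial ring `K[x_v : v ∈ α]`. -/
noncomputable def edgeIdeal (K : Type*) [Field K] {α : Type*} [DecidableEq α] {t : ℕ}
    (Vs : Fin t → Finset α) (s : ℕ) : Ideal (MvPolynomial α K) :=
  Ideal.span {m : MvPolynomial α K |
    ∃ e : Finset α, IsEdge Vs s e ∧ m = ∏ v ∈ e, MvPolynomial.X v}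

/-- The height of an ideal: the infimum of the heights (in the prime spectrum, ordered
by inclusion) of the primes minimal over it. -/
noncomputable def idealHeight {R : Type*} [CommRing R] (I : Ideal R) : ℕ∞ :=
  ⨅ (p : PrimeSpectrum R) (_ : p.asIdeal ∈ I.minimalPrimes), Order.height p

open MvPolynomial in
lemma span_X_eq_ker (K : Type*) [Field K] {α : Type*} [DecidableEq α] (S : Finset α) :
    Ideal.span (MvPolynomial.X '' (S : Set α) : Set (MvPolynomial α K)) =
      RingHom.ker (aeval (fun v => if v ∈ S then 0 else X v) :
        MvPolynomial α K →ₐ[K] MvPolynomial α K) := by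
  set φ := (aeval (fun v => if v ∈ S then 0 else X v) :
        MvPolynomial α K →ₐ[K] MvPolynomial α K) with hφ
  set P := Ideal.span (MvPolynomial.X '' (S : Set α) : Set (MvPolynomial α K)) with hP
  apply le_antisymm
  · rw [hP, Ideal.span_le]
    rintro _ ⟨v, hv, rfl⟩
    have hv' : v ∈ S := hv
    simp [hφ, RingHom.mem_ker, hv']
  · intro p hp
    have h : (Ideal.Quotient.mkₐ K P).comp φ = Ideal.Quotient.mkₐ K P := by
      apply MvPolynomial.algHom_ext
      intro v
      by_cases hv : v ∈ S
      · have : (X v : MvPolynomial α K) ∈ P := Ideal.subset_span ⟨v, hv, rfl⟩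
        simp [hφ, hv, (Ideal.Quotient.eq_zero_iff_mem.2 this)]
      · simp [hφ, hv]
    have h2 := DFunLike.congr_fun h p
    have hp' : φ p = 0 := hp
    simp only [AlgHom.comp_apply, hp', map_zero] at h2
    exact Ideal.Quotient.eq_zero_iff_mem.1 h2.symm

lemma span_X_prime (K : Type*) [Field K] {α : Type*} [DecidableEq α] (S : Finset α) :
    (Ideal.span (MvPolynomial.X '' (S : Set α) : Set (MvPolynomial α K))).IsPrime := by
  rw [span_X_eq_ker]
  exact RingHom.ker_isPrime _

lemma le_height_span_X (K : Type*) [Field K] {α : Type*} [DecidableEq α] (S : Finset α) :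
    (S.card : ℕ∞) ≤
      (Ideal.span (MvPolynomial.X '' (S : Set α) : Set (MvPolynomial α K))).height := by
  induction S using Finset.induction_on with
  | empty => simp
  | insert a S ha ih =>
    have h1 := span_X_prime K S
    have h2 := span_X_prime K (insert a S)
    rw [Finset.card_insert_of_notMem ha, Nat.cast_add, Nat.cast_one]
    refine (add_le_add_left ih 1).trans (Ideal.height_add_one_le_of_lt_of_isPrime ?_)
    refine lt_of_le_of_ne (Ideal.span_mono (Set.image_mono (by simp))) ?_
    intro h
    have hm : (MvPolynomial.X a : MvPolynomial α K) ∈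
        Ideal.span (MvPolynomial.X '' (S : Set α) : Set (MvPolynomial α K)) := by
      rw [h]
      exact Ideal.subset_span ⟨a, by simp, rfl⟩
    rw [span_X_eq_ker, RingHom.mem_ker] at hm
    simp [ha] at hm

lemma height_span_X_le (K : Type*) [Field K] {α : Type*} [DecidableEq α] [Fintype α]
    (S : Finset α) :
    (Ideal.span (MvPolynomial.X '' (S : Set α) : Set (MvPolynomial α K))).height ≤ S.card := by
  have h1 := span_X_prime K S
  refine (Ideal.height_le_card_of_mem_minimalPrimes_span (S.finite_toSet.image MvPolynomial.X)
    (p := Ideal.span (MvPolynomial.X '' (S : Set α) : Set (MvPolynomial α K))) ?_).trans ?_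
  · rw [Ideal.minimalPrimes_eq_subsingleton_self]
    rfl
  · have := Set.ncard_image_le (f := (MvPolynomial.X : α → MvPolynomial α K)) S.finite_toSet
    rw [Set.ncard_coe_finset] at this
    exact_mod_cast this

lemma sum_first_le {t k : ℕ} (f : Fin t → ℕ) (hf : ∀ i j, i ≤ j → f i ≤ f j)
    (A : Finset (Fin t)) (hA : k ≤ A.card) :
    ∑ i ∈ Finset.univ.filter (fun i : Fin t => i.val < k), f i ≤ ∑ i ∈ A, f i := by
  set F := Finset.univ.filter (fun i : Fin t => i.val < k) with hF
  have hFc : F.card ≤ k := by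
    have : (F.image Fin.val).card ≤ (Finset.range k).card := by
      apply Finset.card_le_card
      intro x hx
      simp only [hF, Finset.mem_image, Finset.mem_filter] at hx
      obtain ⟨i, hi, rfl⟩ := hx
      simpa using hi.2
    rwa [Finset.card_image_of_injective _ Fin.val_injective, Finset.card_range] at this
  have hc : (F \ A).card ≤ (A \ F).card := by
    have h1 := Finset.card_sdiff_add_card_inter F A
    have h2 := Finset.card_sdiff_add_card_inter A F
    rw [Finset.inter_comm] at h2
    omega
  have h1 : ∑ i ∈ F \ A, f i ≤ ∑ i ∈ A \ F, f i := by
    calc ∑ i ∈ F \ A, f i ≤ (F \ A).card • F.sup f :=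
          Finset.sum_le_card_nsmul _ _ _ fun i hi => Finset.le_sup (Finset.mem_sdiff.1 hi).1
      _ ≤ (A \ F).card • F.sup f := Nat.mul_le_mul_right _ hc
      _ ≤ _ := Finset.card_nsmul_le_sum _ _ _ fun j hj => Finset.sup_le fun i hi => by
          apply hf
          simp only [hF, Finset.mem_sdiff, Finset.mem_filter, Finset.mem_univ, true_and] at hi hj
          exact Fin.le_def.2 (by omega)
  rw [← Finset.sum_inter_add_sum_sdiff F A, ← Finset.sum_inter_add_sum_sdiff A F,
    Finset.inter_comm A F]
  omega

/-- If the sides are ordered by increasing cardinality, the height of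
the edge ideal of the complete `s`-uniform `t`-partite hypergraph equals
`|V_1| + ⋯ + |V_{t-s+1}|` (in `0`-indexed form, the sum of the cardinalities of the
sides with index `< t - s + 1`). -/
theorem height_edgeIdeal
    (K : Type*) [Field K] {α : Type*} [DecidableEq α] [Fintype α] {t s : ℕ}
    (hs : 2 ≤ s) (hst : s ≤ t)
    (Vs : Fin t → Finset α)
    (hdisj : ∀ i j : Fin t, i ≠ j → Disjoint (Vs i) (Vs j))
    (hne : ∀ i : Fin t, (Vs i).Nonempty)
    (huniv : vertexSet Vs = Finset.univ)
    (hmono : ∀ i j : Fin t, i ≤ j → (Vs i).card ≤ (Vs j).card) :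
    idealHeight (edgeIdeal K Vs s) =
      (∑ i ∈ Finset.univ.filter (fun i : Fin t => i.val < t - s + 1), (Vs i).card :
        ℕ) := by
  classical
  have hVuniq : ∀ {v : α} {i j : Fin t}, v ∈ Vs i → v ∈ Vs j → i = j := by
    intro v i j hi hj
    by_contra hij
    exact Finset.disjoint_left.1 (hdisj i j hij) hi hj
  have hcard : ∀ A : Finset (Fin t), (A.biUnion Vs).card = ∑ i ∈ A, (Vs i).card := by
    intro A
    exact Finset.card_biUnion fun i _ j _ hij => hdisj i j hij
  unfold idealHeight
  apply le_antisymm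
  · set F := Finset.univ.filter (fun i : Fin t => i.val < t - s + 1) with hF
    have hP := span_X_prime K (F.biUnion Vs)
    have hle : edgeIdeal K Vs s ≤
        Ideal.span (MvPolynomial.X '' ((F.biUnion Vs : Finset α) : Set α)) := by
      unfold edgeIdeal
      rw [Ideal.span_le]
      rintro _ ⟨e, ⟨-, hec, he1⟩, rfl⟩
      have : ∃ v ∈ e, v ∈ F.biUnion Vs := by
        by_contra hcon
        push Not at hcon
        have hside : ∀ v : α, ∃ i, v ∈ Vs i := by
          intro v
          have : v ∈ vertexSet Vs := by rw [huniv]; simp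
          simpa [vertexSet] using this
        choose g hg using hside
        have hinj : Set.InjOn (fun v => (g v).val) e := by
          intro v hv w hw hvw
          have hvw' : g v = g w := Fin.ext hvw
          refine Finset.card_le_one.1 (he1 (g v)) v ?_ w ?_
          · exact Finset.mem_inter.2 ⟨hv, hg v⟩
          · rw [hvw']; exact Finset.mem_inter.2 ⟨hw, hg w⟩
        have hsub : e.image (fun v => (g v).val) ⊆ Finset.Ico (t - s + 1) t := by
          intro n hn
          obtain ⟨v, hv, rfl⟩ := Finset.mem_image.1 hn
          rw [Finset.mem_Ico]
          refine ⟨?_, (g v).2⟩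
          by_contra hlt
          exact hcon v hv (Finset.mem_biUnion.2 ⟨g v, by simp [hF]; omega, hg v⟩)
        have := Finset.card_le_card hsub
        rw [Finset.card_image_of_injOn hinj, Nat.card_Ico] at this
        omega
      obtain ⟨v, hv, hvF⟩ := this
      exact Ideal.mem_of_dvd _ (Finset.dvd_prod_of_mem _ hv) (Ideal.subset_span ⟨v, hvF, rfl⟩)
    obtain ⟨q, hq, hqP⟩ := Ideal.exists_minimalPrimes_le hle
    have hqp : q.IsPrime := hq.1.1
    refine (iInf₂_le (⟨q, hqp⟩ : PrimeSpectrum (MvPolynomial α K)) hq).trans ?_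
    rw [← PrimeSpectrum.height_eq_orderHeight, ← hcard]
    exact (Ideal.height_mono hqP).trans (height_span_X_le K _)
  · refine le_iInf₂ fun p hp => ?_
    rw [← PrimeSpectrum.height_eq_orderHeight]
    have hIp : edgeIdeal K Vs s ≤ p.asIdeal := hp.1.2
    set C := Finset.univ.filter (fun v : α => (MvPolynomial.X v : MvPolynomial α K) ∈ p.asIdeal)
      with hC
    have hCp : Ideal.span (MvPolynomial.X '' (C : Set α)) ≤ p.asIdeal := by
      rw [Ideal.span_le]
      rintro _ ⟨v, hv, rfl⟩
      simpa [hC] using hv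
    refine le_trans ?_ ((le_height_span_X K C).trans (Ideal.height_mono hCp))
    rw [Nat.cast_le]
    set A := Finset.univ.filter (fun i : Fin t => Vs i ⊆ C) with hA
    have hAc : t - s + 1 ≤ A.card := by
      by_contra hlt
      have hB : s ≤ (Aᶜ).card := by
        rw [Finset.card_compl, Fintype.card_fin]
        omega
      obtain ⟨B, hBA, hBs⟩ := Finset.exists_subset_card_eq hB
      have hex : ∀ i : Fin t, ∃ v ∈ Vs i, i ∈ B → v ∉ C := by
        intro i
        by_cases hi : i ∈ B
        · have := hBA hi
          simp only [hA, Finset.mem_compl, Finset.mem_filter, Finset.mem_univ, true_and] at this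
          obtain ⟨v, hv, hvC⟩ := Finset.not_subset.1 this
          exact ⟨v, hv, fun _ => hvC⟩
        · obtain ⟨v, hv⟩ := hne i
          exact ⟨v, hv, fun h => absurd h hi⟩
      choose g hg hgC using hex
      have hginj : Function.Injective g := by
        intro i j hij
        exact hVuniq (hg i) (hij ▸ hg j)
      have hedge : IsEdge Vs s (B.image g) := by
        refine ⟨by rw [huniv]; exact Finset.subset_univ _, ?_, ?_⟩
        · rw [Finset.card_image_of_injective _ hginj, hBs]
        · intro i
          rw [Finset.card_le_one]
          intro a ha b hb
          simp only [Finset.mem_inter, Finset.mem_image] at ha hb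
          obtain ⟨⟨j, -, rfl⟩, hj⟩ := ha
          obtain ⟨⟨k, -, rfl⟩, hk⟩ := hb
          rw [hVuniq (hg j) hj, hVuniq (hg k) hk]
      have hmem := hIp (Ideal.subset_span ⟨_, hedge, rfl⟩)
      obtain ⟨v, hv, hvp⟩ := (Ideal.IsPrime.prod_mem_iff (hp := p.isPrime)).1 hmem
      obtain ⟨i, hi, rfl⟩ := Finset.mem_image.1 hv
      exact hgC i hi (by simpa [hC] using hvp)
    refine (sum_first_le (fun i => (Vs i).card) hmono A hAc).trans ?_
    rw [← hcard]
    apply Finset.card_le_card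
    intro v hv
    obtain ⟨i, hi, hvi⟩ := Finset.mem_biUnion.1 hv
    exact (Finset.mem_filter.1 hi).2 hvi
end

section
/- Let H be the complete s-uniform t-partite hypergraph with sides V_1, …, V_t ordered so that |V_1| ≤ |V_2| ≤ ⋯ ≤ |V_t|, and let I(H) be its edge ideal in R = K[x_v : v ∈ V]. Then the Krull dimension of the quotient ring R/I(H) equals |V_{t−s+2}| + |V_{t−s+3}| + ⋯ + |V_t|. -/
open Finset

open MvPolynomial in
/-- Restriction to the variables in `F`. -/
noncomputable def resHom (K : Type*) [Field K] {α : Type*} [DecidableEq α] (F : Finset α) :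
    MvPolynomial α K →ₐ[K] MvPolynomial F K :=
  aeval (fun v => if h : v ∈ F then X ⟨v, h⟩ else 0)

lemma resHom_rename (K : Type*) [Field K] {α : Type*} [DecidableEq α] (F : Finset α)
    (f : MvPolynomial F K) :
    resHom K F (MvPolynomial.rename Subtype.val f) = f := by
  have : (resHom K F).comp (MvPolynomial.rename Subtype.val) = AlgHom.id K _ := by
    apply MvPolynomial.algHom_ext
    intro v
    simp [resHom]
  exact DFunLike.congr_fun this f

lemma resHom_surj (K : Type*) [Field K] {α : Type*} [DecidableEq α] (F : Finset α) :
    Function.Surjective (resHom K F) := fun f => ⟨_, resHom_rename K F f⟩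

lemma ker_resHom_le {K : Type*} [Field K] {α : Type*} [DecidableEq α] (F : Finset α)
    (p : Ideal (MvPolynomial α K)) (hp : ∀ v, v ∉ F → MvPolynomial.X v ∈ p) :
    RingHom.ker (resHom K F) ≤ p := by
  intro f hf
  have : ((Ideal.Quotient.mkₐ K p).comp (MvPolynomial.rename Subtype.val)).comp (resHom K F)
      = Ideal.Quotient.mkₐ K p := by
    apply MvPolynomial.algHom_ext
    intro v
    by_cases h : v ∈ F
    · simp [resHom, h]
    · have := Ideal.Quotient.eq_zero_iff_mem.2 (hp v h)
      simp [resHom, h, this]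
  have h2 := DFunLike.congr_fun this f
  rw [RingHom.mem_ker] at hf
  simp only [AlgHom.comp_apply, hf, map_zero] at h2
  exact Ideal.Quotient.eq_zero_iff_mem.1 h2.symm

lemma dim_mv (K : Type*) [Field K] {α : Type*} [DecidableEq α] (F : Finset α) :
    ringKrullDim (MvPolynomial F K) = (F.card : ℕ) := by
  rw [MvPolynomial.ringKrullDim_of_isNoetherianRing]
  simp

lemma dim_ker (K : Type*) [Field K] {α : Type*} [DecidableEq α] (F : Finset α) :
    ringKrullDim (MvPolynomial α K ⧸ RingHom.ker (resHom K F)) = (F.card : ℕ) := by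
  rw [← dim_mv K F]
  exact ringKrullDim_eq_of_ringEquiv
    (Ideal.quotientKerAlgEquivOfSurjective (resHom_surj K F)).toRingEquiv

lemma dim_le_of_forall {R : Type*} [CommRing R] (I : Ideal R) (n : WithBot ℕ∞)
    (h : ∀ p : Ideal R, p.IsPrime → I ≤ p → ∃ J : Ideal R, J ≤ p ∧ ringKrullDim (R ⧸ J) ≤ n) :
    ringKrullDim (R ⧸ I) ≤ n := by
  rw [ringKrullDim_quotient]
  refine iSup_le fun l => ?_
  obtain ⟨J, hJ, hn⟩ := h l.head.1.asIdeal l.head.1.isPrime l.head.2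
  rw [ringKrullDim_quotient] at hn
  refine le_trans ?_ hn
  let l' : LTSeries (PrimeSpectrum.zeroLocus (J : Set R)) :=
    { length := l.length
      toFun := fun i => ⟨(l i).1, fun x hx => (l.head_le i) (hJ hx)⟩
      step := fun i => l.step i }
  exact Order.LTSeries.length_le_krullDim l'

lemma comb {t s : ℕ} (hs : 2 ≤ s) (hst : s ≤ t) (c : Fin t → ℕ)
    (hmono : ∀ i j : Fin t, i ≤ j → c i ≤ c j) (S : Finset (Fin t)) (hS : S.card ≤ s - 1) :
    ∑ i ∈ S, c i ≤ ∑ i ∈ Finset.univ.filter (fun i : Fin t => t - s + 1 ≤ i.val), c i := by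
  set k : Fin t := ⟨t - s + 1, by omega⟩ with hk
  have hT : Finset.univ.filter (fun i : Fin t => t - s + 1 ≤ i.val) = Finset.Ici k := by
    ext i; simp [hk, Fin.le_def]
  rw [hT]
  set T := Finset.Ici k
  have hTc : T.card = s - 1 := by
    simp [T, hk, Fin.card_Ici]; omega
  have h1 := Finset.card_sdiff_add_card_inter S T
  have h2 := Finset.card_sdiff_add_card_inter T S
  rw [Finset.inter_comm] at h2
  have h3 := Finset.sum_inter_add_sum_sdiff S T c
  have h4 := Finset.sum_inter_add_sum_sdiff T S c
  rw [Finset.inter_comm] at h4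
  have h5 : ∑ i ∈ S \ T, c i ≤ (S \ T).card * c k := by
    rw [← smul_eq_mul]
    apply Finset.sum_le_card_nsmul
    intro i hi
    apply hmono
    simp [T] at hi
    exact hi.2.le
  have h6 : (T \ S).card * c k ≤ ∑ i ∈ T \ S, c i := by
    rw [← smul_eq_mul]
    apply Finset.card_nsmul_le_sum
    intro i hi
    apply hmono
    simp [T] at hi
    exact hi.1
  have h7 : (S \ T).card * c k ≤ (T \ S).card * c k := Nat.mul_le_mul_right _ (by omega)
  omega

lemma edge_of_many {α : Type*} [DecidableEq α] {t s : ℕ} (Vs : Fin t → Finset α)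
    (hdisj : ∀ i j : Fin t, i ≠ j → Disjoint (Vs i) (Vs j)) (F : Finset α)
    (h : s ≤ (Finset.univ.filter (fun i => (F ∩ Vs i).Nonempty)).card) :
    ∃ e, IsEdge Vs s e ∧ e ⊆ F := by
  obtain ⟨S, hS, hc⟩ := Finset.exists_subset_card_eq h
  have hS' : ∀ i : S, ∃ v, v ∈ F ∧ v ∈ Vs i.1 := by
    intro i
    obtain ⟨v, hv⟩ := (Finset.mem_filter.1 (hS i.2)).2
    exact ⟨v, Finset.mem_inter.1 hv⟩
  choose f hf hfV using hS'
  have huniq : ∀ (i : S) (j : Fin t), f i ∈ Vs j → i.1 = j := by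
    intro i j hj
    by_contra hij
    exact Finset.disjoint_left.1 (hdisj _ _ hij) (hfV i) hj
  have hinj : Function.Injective f := by
    intro i j hij
    exact Subtype.ext (huniq i j (hij ▸ hfV j))
  refine ⟨Finset.univ.image f, ⟨?_, ?_, ?_⟩, ?_⟩
  · intro v hv
    obtain ⟨i, -, rfl⟩ := Finset.mem_image.1 hv
    exact Finset.mem_biUnion.2 ⟨i, Finset.mem_univ _, hfV i⟩
  · rw [Finset.card_image_of_injective _ hinj]; simpa using hc
  · intro j
    rw [Finset.card_le_one]
    intro a ha b hb
    simp only [Finset.mem_inter, Finset.mem_image, Finset.mem_univ, true_and] at ha hb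
    obtain ⟨⟨i, rfl⟩, hi⟩ := ha
    obtain ⟨⟨i', rfl⟩, hi'⟩ := hb
    rw [Subtype.ext ((huniq i j hi).trans (huniq i' j hi').symm)]
  · intro v hv
    obtain ⟨i, -, rfl⟩ := Finset.mem_image.1 hv
    exact hf i

lemma card_le_of_indep {α : Type*} [DecidableEq α] [Fintype α] {t s : ℕ}
    (hs : 2 ≤ s) (hst : s ≤ t) (Vs : Fin t → Finset α)
    (hdisj : ∀ i j : Fin t, i ≠ j → Disjoint (Vs i) (Vs j))
    (huniv : vertexSet Vs = Finset.univ)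
    (hmono : ∀ i j : Fin t, i ≤ j → (Vs i).card ≤ (Vs j).card)
    (F : Finset α) (hF : ∀ e, IsEdge Vs s e → ¬ e ⊆ F) :
    F.card ≤ ∑ i ∈ Finset.univ.filter (fun i : Fin t => t - s + 1 ≤ i.val), (Vs i).card := by
  set S := Finset.univ.filter (fun i => (F ∩ Vs i).Nonempty) with hSdef
  have hS : S.card ≤ s - 1 := by
    by_contra hc
    have hc' : s ≤ S.card := by omega
    obtain ⟨e, he, heF⟩ := edge_of_many (s := s) Vs hdisj F (by convert hc')
    exact hF e he heF
  refine le_trans ?_ (comb hs hst (fun i => (Vs i).card) hmono S hS)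
  refine le_trans (Finset.card_le_card (t := S.biUnion Vs) ?_) Finset.card_biUnion_le
  intro v hv
  have : v ∈ vertexSet Vs := huniv ▸ Finset.mem_univ v
  obtain ⟨i, -, hi⟩ := Finset.mem_biUnion.1 this
  exact Finset.mem_biUnion.2 ⟨i, by simpa [hSdef] using ⟨v, by simp [hv, hi]⟩, hi⟩

lemma top_indep {α : Type*} [DecidableEq α] {t s : ℕ}
    (hs : 2 ≤ s) (hst : s ≤ t) (Vs : Fin t → Finset α) (e : Finset α) (he : IsEdge Vs s e) :
    ¬ e ⊆ (Finset.univ.filter (fun i : Fin t => t - s + 1 ≤ i.val)).biUnion Vs := by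
  intro hsub
  set k : Fin t := ⟨t - s + 1, by omega⟩ with hk
  have hT : Finset.univ.filter (fun i : Fin t => t - s + 1 ≤ i.val) = Finset.Ici k := by
    ext i; simp [hk, Fin.le_def]
  rw [hT] at hsub
  have h1 : e ⊆ (Finset.Ici k).biUnion (fun i => e ∩ Vs i) := by
    intro v hv
    obtain ⟨i, hi, hvi⟩ := Finset.mem_biUnion.1 (hsub hv)
    exact Finset.mem_biUnion.2 ⟨i, hi, Finset.mem_inter.2 ⟨hv, hvi⟩⟩
  have h2 := (Finset.card_le_card h1).trans
    (Finset.card_biUnion_le_card_mul _ _ 1 (fun i _ => he.2.2 i))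
  rw [he.2.1, Fin.card_Ici] at h2
  simp [hk] at h2
  omega

/-- If the sides are ordered by increasing cardinality, the Krull
dimension of `R/I(H)` for the complete `s`-uniform `t`-partite hypergraph `H` equals
`|V_{t-s+2}| + ⋯ + |V_t|` (in `0`-indexed form, the sum of the cardinalities of the
sides with index `≥ t - s + 1`). -/
theorem krullDim_quotient_edgeIdeal
    (K : Type*) [Field K] {α : Type*} [DecidableEq α] [Fintype α] {t s : ℕ}
    (hs : 2 ≤ s) (hst : s ≤ t)
    (Vs : Fin t → Finset α)
    (hdisj : ∀ i j : Fin t, i ≠ j → Disjoint (Vs i) (Vs j))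
    (hne : ∀ i : Fin t, (Vs i).Nonempty)
    (huniv : vertexSet Vs = Finset.univ)
    (hmono : ∀ i j : Fin t, i ≤ j → (Vs i).card ≤ (Vs j).card) :
    ringKrullDim (MvPolynomial α K ⧸ edgeIdeal K Vs s) =
      (∑ i ∈ Finset.univ.filter (fun i : Fin t => t - s + 1 ≤ i.val), (Vs i).card :
        ℕ) := by
  apply le_antisymm
  · apply dim_le_of_forall
    intro p hp hIp
    classical
    let F : Finset α := Finset.univ.filter (fun v => (MvPolynomial.X v : MvPolynomial α K) ∉ p)
    refine ⟨RingHom.ker (resHom K F), ker_resHom_le F p ?_, ?_⟩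
    · intro v hv
      simpa [F] using hv
    · rw [dim_ker]
      have : F.card ≤ ∑ i ∈ Finset.univ.filter (fun i : Fin t => t - s + 1 ≤ i.val),
          (Vs i).card := by
        apply card_le_of_indep hs hst Vs hdisj huniv hmono F
        intro e he heF
        have h1 : (∏ v ∈ e, MvPolynomial.X v : MvPolynomial α K) ∈ p :=
          hIp (Ideal.subset_span ⟨e, he, rfl⟩)
        obtain ⟨v, hv, hvp⟩ := (hp.prod_mem_iff).1 h1
        exact (Finset.mem_filter.1 (heF hv)).2 hvp
      exact_mod_cast this
  · set T := Finset.univ.filter (fun i : Fin t => t - s + 1 ≤ i.val) with hTdef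
    have hc : (T.biUnion Vs).card = ∑ i ∈ T, (Vs i).card :=
      Finset.card_biUnion (fun i _ j _ hij => hdisj i j hij)
    rw [← hc, ← dim_ker K]
    have hle : edgeIdeal K Vs s ≤ RingHom.ker (resHom K (T.biUnion Vs)) := by
      refine Ideal.span_le.2 ?_
      rintro _ ⟨e, he, rfl⟩
      have := top_indep hs hst Vs e he
      obtain ⟨v, hv, hvT⟩ := Finset.not_subset.1 this
      simp only [SetLike.mem_coe, RingHom.mem_ker, map_prod]
      apply Finset.prod_eq_zero hv
      simp only [resHom, MvPolynomial.aeval_X]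
      exact dif_neg hvT
    exact ringKrullDim_le_of_surjective (Ideal.Quotient.factor hle)
      (Ideal.Quotient.factor_surjective hle)
end

section
/- Let H be the complete s-uniform t-partite hypergraph with sides V_1, …, V_t, and suppose H is m-balanced for some m ≥ 1, i.e., |V_i| = m for every i. Then the height of the edge ideal I(H) equals m(t−s+1) and the Krull dimension of R/I(H) equals m(s−1). -/
open Finset

open MvPolynomial in
lemma aux_sub_mem {K α : Type*} [Field K] [DecidableEq α] (C : Finset α) (f : MvPolynomial α K) :
    f - aeval (fun v => if v ∈ C then (0 : MvPolynomial α K) else X v) f ∈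
      Ideal.span ((X : α → MvPolynomial α K) '' (C : Set α)) := by
  induction f using MvPolynomial.induction_on with
  | C a => simp
  | add p q hp hq =>
    rw [map_add, add_sub_add_comm]
    exact Ideal.add_mem _ hp hq
  | mul_X p v hp =>
    rw [map_mul, aeval_X]
    split_ifs with h
    · rw [mul_zero, sub_zero]
      exact Ideal.mul_mem_left _ _ (Ideal.subset_span ⟨v, by simpa using h, rfl⟩)
    · rw [← sub_mul]
      exact Ideal.mul_mem_right _ _ hp

open MvPolynomial in
lemma aux_ker {K α : Type*} [Field K] [DecidableEq α] (C : Finset α) :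
    RingHom.ker (aeval (R := K) (fun v => if v ∈ C then (0 : MvPolynomial α K) else X v)) =
      Ideal.span ((X : α → MvPolynomial α K) '' (C : Set α)) := by
  apply le_antisymm
  · intro f hf
    have := aux_sub_mem C f
    rw [RingHom.mem_ker] at hf
    rwa [hf, sub_zero] at this
  · rw [Ideal.span_le]
    rintro _ ⟨v, hv, rfl⟩
    have hv : v ∈ C := by simpa using hv
    simp [RingHom.mem_ker, hv]

open MvPolynomial in
lemma aux_prime {K α : Type*} [Field K] [DecidableEq α] (C : Finset α) :
    (Ideal.span ((X : α → MvPolynomial α K) '' (C : Set α))).IsPrime := by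
  rw [← aux_ker]
  exact RingHom.ker_isPrime _

open MvPolynomial in
lemma aux_X_mem {K α : Type*} [Field K] [DecidableEq α] (C : Finset α) (v : α)
    (h : (X v : MvPolynomial α K) ∈ Ideal.span ((X : α → MvPolynomial α K) '' (C : Set α))) :
    v ∈ C := by
  by_contra hv
  rw [← aux_ker, RingHom.mem_ker, aeval_X, if_neg hv] at h
  exact X_ne_zero _ h

open MvPolynomial in
lemma aux_height_ge {K α : Type*} [Field K] [DecidableEq α] (C : Finset α) :
    (C.card : ℕ∞) ≤ (Ideal.span ((X : α → MvPolynomial α K) '' (C : Set α))).height := by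
  induction C using Finset.induction_on with
  | empty => simp
  | insert a C ha ih =>
    rw [Finset.card_insert_of_notMem ha]
    have h1 := aux_prime (K := K) C
    have h2 := aux_prime (K := K) (insert a C)
    push_cast at h2 ⊢
    refine le_trans (add_le_add_left ih 1) (Ideal.height_add_one_le_of_lt_of_isPrime ?_)
    refine lt_of_le_of_ne (Ideal.span_mono (Set.image_mono (Set.subset_insert _ _))) ?_
    intro h
    apply ha
    apply aux_X_mem (K := K)
    rw [h]
    exact Ideal.subset_span ⟨a, by simp, rfl⟩

open MvPolynomial in
lemma aux_height_le {K α : Type*} [Field K] [DecidableEq α] [Fintype α] (C : Finset α) :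
    (Ideal.span ((X : α → MvPolynomial α K) '' (C : Set α))).height ≤ (C.card : ℕ∞) := by
  have h1 := aux_prime (K := K) C
  have hf : ((X : α → MvPolynomial α K) '' (C : Set α)).Finite := (C.finite_toSet).image _
  refine (Ideal.height_le_card_of_mem_minimalPrimes_span hf ?_).trans ?_
  · rw [Ideal.minimalPrimes_eq_subsingleton_self]; rfl
  · have := Set.ncard_image_le (f := (X : α → MvPolynomial α K)) C.finite_toSet
    rw [Set.ncard_coe_finset] at this
    exact_mod_cast this

open MvPolynomial in
lemma aux_dim_ge {K α : Type*} [Field K] [DecidableEq α] [Fintype α] (C : Finset α)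
    (I : Ideal (MvPolynomial α K))
    (hI : I ≤ Ideal.span ((X : α → MvPolynomial α K) '' (C : Set α))) :
    ((Fintype.card α - C.card : ℕ) : WithBot ℕ∞) ≤ ringKrullDim (MvPolynomial α K ⧸ I) := by
  let φ : MvPolynomial α K →ₐ[K] MvPolynomial {v // v ∉ C} K :=
    aeval (fun v => if h : v ∉ C then X ⟨v, h⟩ else 0)
  have hφ : Function.Surjective φ := by
    intro g
    refine ⟨rename Subtype.val g, ?_⟩
    have : φ.comp (rename Subtype.val) = AlgHom.id K _ := by
      ext v : 1
      simp [φ, v.2]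
    exact DFunLike.congr_fun this g
  have hk : ∀ a ∈ I, φ.toRingHom a = 0 := by
    intro a ha
    have : Ideal.span ((X : α → MvPolynomial α K) '' (C : Set α)) ≤ RingHom.ker φ.toRingHom := by
      rw [Ideal.span_le]
      rintro _ ⟨v, hv, rfl⟩
      have hv : v ∈ C := by simpa using hv
      simp [RingHom.mem_ker, hv, φ]
    exact this (hI ha)
  have h := ringKrullDim_le_of_surjective (Ideal.Quotient.lift I φ.toRingHom hk)
    (Ideal.Quotient.lift_surjective_of_surjective _ _ hφ)
  refine le_trans (le_of_eq ?_) h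
  rw [MvPolynomial.ringKrullDim_of_isNoetherianRing, ringKrullDim_eq_zero_of_field, zero_add,
    Nat.card_eq_fintype_card, Fintype.card_subtype_compl, Fintype.card_coe]

lemma aux_dim_le {R : Type*} [CommRing R] [Nontrivial R] (I : Ideal R) (n k : ℕ)
    (hd : ringKrullDim R ≤ (n + k : ℕ))
    (h : ∀ p : Ideal R, p.IsPrime → I ≤ p → (n : ℕ∞) ≤ p.height) :
    ringKrullDim (R ⧸ I) ≤ (k : ℕ) := by
  rw [ringKrullDim_quotient, Order.krullDim]
  refine iSup_le fun l => ?_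
  let l' : LTSeries (PrimeSpectrum R) := l.map Subtype.val (fun _ _ h => h)
  have h1 : (n : ℕ∞) ≤ Order.height l'.head := by
    rw [← PrimeSpectrum.height_eq_orderHeight]
    exact h _ l'.head.2 l.head.2
  have h2 : (l.length : ℕ∞) ≤ Order.coheight l'.head := Order.length_le_coheight_head (p := l')
  rw [ringKrullDim, Order.krullDim_eq_iSup_height_add_coheight_of_nonempty] at hd
  have hd' : (⨆ a : PrimeSpectrum R, Order.height a + Order.coheight a) ≤ ((n + k : ℕ) : ℕ∞) := by
    exact_mod_cast hd
  have h3 := (le_iSup (fun a : PrimeSpectrum R => Order.height a + Order.coheight a) l'.head).trans hd'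
  have h4 : ((n + l.length : ℕ) : ℕ∞) ≤ ((n + k : ℕ) : ℕ∞) := by
    push_cast at h3 ⊢
    exact (add_le_add h1 h2).trans h3
  have h5 : n + l.length ≤ n + k := by exact_mod_cast h4
  have h6 : l.length ≤ k := by omega
  exact_mod_cast h6

lemma aux_cover {α : Type*} [DecidableEq α] {t s : ℕ} (hst : s ≤ t)
    (Vs : Fin t → Finset α)
    (hdisj : ∀ i j : Fin t, i ≠ j → Disjoint (Vs i) (Vs j))
    (m : ℕ) (hbal : ∀ i : Fin t, (Vs i).card = m) (C : Finset α)
    (hC : ∀ e, IsEdge Vs s e → ∃ v ∈ e, v ∈ C) : m * (t - s + 1) ≤ C.card := by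
  set A : Finset (Fin t) := Finset.univ.filter (fun i => Vs i ⊆ C) with hA
  by_cases hc : t - s + 1 ≤ A.card
  · calc m * (t - s + 1) ≤ m * A.card := Nat.mul_le_mul_left _ hc
      _ = (A.biUnion Vs).card := by
        rw [Finset.card_biUnion (fun i _ j _ h => hdisj i j h)]
        simp [hbal, mul_comm]
      _ ≤ C.card := by
        apply Finset.card_le_card
        rw [Finset.biUnion_subset]
        intro i hi
        simpa [hA] using hi
  · exfalso
    have hcc : s ≤ Aᶜ.card := by
      rw [Finset.card_compl, Fintype.card_fin]; omega
    obtain ⟨B, hB, hBs⟩ := Finset.exists_subset_card_eq hcc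
    have : ∀ i : Fin t, ∃ v, i ∈ B → v ∈ Vs i ∧ v ∉ C := by
      intro i
      by_cases hi : i ∈ B
      · have := hB hi
        simp only [hA, Finset.mem_compl, Finset.mem_filter, Finset.mem_univ, true_and,
          Finset.not_subset] at this
        obtain ⟨v, hv⟩ := this
        exact ⟨v, fun _ => hv⟩
      · have hpos : Nonempty α := by
          by_contra hne
          rw [not_nonempty_iff] at hne
          have hs0 : 0 < Aᶜ.card ∨ s = 0 := by omega
          rcases hs0 with h | h
          · obtain ⟨j, hj⟩ := Finset.card_pos.mp h
            simp only [hA, Finset.mem_compl, Finset.mem_filter, Finset.mem_univ, true_and,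
              Finset.not_subset] at hj
            exact hne.elim hj.choose
          · obtain ⟨v, -⟩ := hC ∅ ⟨by simp, by simp [h], by simp⟩
            exact hne.elim v
        exact ⟨hpos.some, fun h => absurd h hi⟩
    choose f hf using this
    have hinj : ∀ i ∈ B, ∀ j, f i ∈ Vs j → i = j := by
      intro i hi j hj
      by_contra hne
      exact Finset.disjoint_left.mp (hdisj i j hne) (hf i hi).1 hj
    obtain ⟨v, hv, hvC⟩ := hC (B.image f) ⟨by
        intro v hv
        obtain ⟨i, hi, rfl⟩ := Finset.mem_image.mp hv
        exact Finset.mem_biUnion.mpr ⟨i, Finset.mem_univ _, (hf i hi).1⟩, by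
        rw [Finset.card_image_of_injOn, hBs]
        intro i hi j hj hij
        apply hinj i hi
        rw [hij]
        exact (hf j hj).1, by
        intro i
        rw [Finset.card_le_one]
        intro a ha b hb
        rw [Finset.mem_inter, Finset.mem_image] at ha hb
        obtain ⟨⟨j, hj, rfl⟩, ha⟩ := ha
        obtain ⟨⟨k, hk, rfl⟩, hb⟩ := hb
        rw [hinj j hj i ha, hinj k hk i hb]⟩
    obtain ⟨i, hi, rfl⟩ := Finset.mem_image.mp hv
    exact (hf i hi).2 hvC

lemma aux_exists {α : Type*} [DecidableEq α] {t s : ℕ} (hs : 2 ≤ s) (hst : s ≤ t)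
    (Vs : Fin t → Finset α)
    (hdisj : ∀ i j : Fin t, i ≠ j → Disjoint (Vs i) (Vs j))
    (m : ℕ) (hbal : ∀ i : Fin t, (Vs i).card = m) :
    ∃ C : Finset α, C.card = m * (t - s + 1) ∧ ∀ e, IsEdge Vs s e → ∃ v ∈ e, v ∈ C := by
  obtain ⟨B, -, hB⟩ := Finset.exists_subset_card_eq
    (s := (Finset.univ : Finset (Fin t))) (n := t - s + 1) (by simp; omega)
  refine ⟨B.biUnion Vs, ?_, ?_⟩
  · rw [Finset.card_biUnion (fun i _ j _ h => hdisj i j h)]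
    simp [hbal, hB, mul_comm]
  · rintro e ⟨he, hes, h1⟩
    by_contra! hno
    have hsub : e ⊆ Bᶜ.biUnion (fun i => e ∩ Vs i) := by
      intro v hv
      obtain ⟨i, -, hi⟩ := Finset.mem_biUnion.mp (he hv)
      refine Finset.mem_biUnion.mpr ⟨i, ?_, Finset.mem_inter.mpr ⟨hv, hi⟩⟩
      rw [Finset.mem_compl]
      exact fun hiB => hno v hv (Finset.mem_biUnion.mpr ⟨i, hiB, hi⟩)
    have h2 := (Finset.card_le_card hsub).trans (Finset.card_biUnion_le_card_mul _ _ 1 (fun i _ => h1 i))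
    rw [Finset.card_compl, Fintype.card_fin, hB] at h2
    omega

/-- If the complete `s`-uniform `t`-partite hypergraph is `m`-balanced
(every side has `m` vertices, `m ≥ 1`), then the height of its edge ideal is
`m(t - s + 1)` and the Krull dimension of `R/I(H)` is `m(s - 1)`. -/
theorem height_and_dim_of_balanced
    (K : Type*) [Field K] {α : Type*} [DecidableEq α] [Fintype α] {t s : ℕ}
    (hs : 2 ≤ s) (hst : s ≤ t)
    (Vs : Fin t → Finset α)
    (hdisj : ∀ i j : Fin t, i ≠ j → Disjoint (Vs i) (Vs j))
    (hne : ∀ i : Fin t, (Vs i).Nonempty)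
    (huniv : vertexSet Vs = Finset.univ)
    (m : ℕ) (hm : 1 ≤ m) (hbal : ∀ i : Fin t, (Vs i).card = m) :
    idealHeight (edgeIdeal K Vs s) = (m * (t - s + 1) : ℕ) ∧
      ringKrullDim (MvPolynomial α K ⧸ edgeIdeal K Vs s) = (m * (s - 1) : ℕ) := by
  classical
  have hcard : Fintype.card α = m * (t - s + 1) + m * (s - 1) := by
    rw [← Finset.card_univ, ← huniv, vertexSet,
      Finset.card_biUnion (fun i _ j _ h => hdisj i j h), ← mul_add]
    have : t - s + 1 + (s - 1) = t := by omega
    simp [hbal, mul_comm, this]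
  obtain ⟨C, hCc, hC⟩ := aux_exists hs hst Vs hdisj m hbal
  have hCp := aux_prime (K := K) C
  have hIC : edgeIdeal K Vs s ≤
      Ideal.span ((MvPolynomial.X : α → MvPolynomial α K) '' (C : Set α)) := by
    rw [edgeIdeal, Ideal.span_le]
    rintro _ ⟨e, he, rfl⟩
    obtain ⟨v, hv, hvC⟩ := hC e he
    exact Ideal.mem_of_dvd _ (Finset.dvd_prod_of_mem _ hv)
      (Ideal.subset_span ⟨v, by simpa using hvC, rfl⟩)
  have hlow : ∀ p : Ideal (MvPolynomial α K), p.IsPrime → edgeIdeal K Vs s ≤ p →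
      ((m * (t - s + 1) : ℕ) : ℕ∞) ≤ p.height := by
    intro p hp hIp
    set D : Finset α := Finset.univ.filter (fun v => (MvPolynomial.X v : MvPolynomial α K) ∈ p)
      with hD
    have hcov := aux_cover hst Vs hdisj m hbal D (by
      intro e he
      have : (∏ v ∈ e, (MvPolynomial.X v : MvPolynomial α K)) ∈ p :=
        hIp (Ideal.subset_span ⟨e, he, rfl⟩)
      obtain ⟨v, hv, hvp⟩ := (hp.prod_mem_iff).mp this
      exact ⟨v, hv, by simpa [hD] using hvp⟩)
    have h1 : ((m * (t - s + 1) : ℕ) : ℕ∞) ≤ (D.card : ℕ∞) := by exact_mod_cast hcov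
    refine h1.trans ((aux_height_ge (K := K) D).trans (Ideal.height_mono ?_))
    rw [Ideal.span_le]
    rintro _ ⟨v, hv, rfl⟩
    simpa [hD] using hv
  refine ⟨le_antisymm ?_ ?_, le_antisymm ?_ ?_⟩
  · obtain ⟨q, hq, hqC⟩ := Ideal.exists_minimalPrimes_le hIC
    refine (iInf₂_le (⟨q, hq.1.1⟩ : PrimeSpectrum (MvPolynomial α K)) hq).trans ?_
    rw [← PrimeSpectrum.height_eq_orderHeight, ← hCc]
    exact (Ideal.height_mono hqC).trans (aux_height_le C)
  · refine le_iInf₂ fun p hp => ?_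
    rw [← PrimeSpectrum.height_eq_orderHeight]
    exact hlow _ p.2 hp.1.2
  · refine aux_dim_le _ (m * (t - s + 1)) _ ?_ hlow
    rw [MvPolynomial.ringKrullDim_of_isNoetherianRing, ringKrullDim_eq_zero_of_field, zero_add,
      Nat.card_eq_fintype_card, hcard]
  · have := aux_dim_ge C _ hIC
    rwa [hCc, hcard, Nat.add_sub_cancel_left] at this
end

section
/- Let H be the complete s-uniform t-partite hypergraph with sides V_1, …, V_t, and let I(H) be its edge ideal in R = K[x_v : v ∈ V]. Then I(H) is unmixed (all minimal primes over I(H) have the same height) if and only if there is an integer m ≥ 1 with |V_i| = m for every i = 1, …, t, i.e., H is m-balanced. -/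
open Finset

open MvPolynomial in
/-- Kill the variables in `S`. -/
noncomputable def killVars (K : Type*) [Field K] {α : Type*} [DecidableEq α] (S : Finset α) :
    MvPolynomial α K →ₐ[K] MvPolynomial α K :=
  aeval (fun v => if v ∈ S then 0 else X v)

/-- The prime generated by the variables in `S`. -/
noncomputable def coverIdeal (K : Type*) [Field K] {α : Type*} [DecidableEq α] (S : Finset α) :
    Ideal (MvPolynomial α K) :=
  RingHom.ker (killVars K S)

section aux
variable (K : Type*) [Field K] {α : Type*} [DecidableEq α]

instance coverIdeal_isPrime (S : Finset α) : (coverIdeal K S).IsPrime :=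
  RingHom.ker_isPrime _

lemma X_mem_coverIdeal (S : Finset α) (v : α) :
    (MvPolynomial.X v : MvPolynomial α K) ∈ coverIdeal K S ↔ v ∈ S := by
  unfold coverIdeal killVars
  rw [RingHom.mem_ker]
  by_cases h : v ∈ S <;> simp [h]

open scoped Classical in
lemma coverIdeal_eq_span (S : Finset α) :
    coverIdeal K S = Ideal.span ((S.image MvPolynomial.X : Finset (MvPolynomial α K)) : Set _) := by
  classical
  apply le_antisymm
  · intro p hp
    set J : Ideal (MvPolynomial α K) :=
      Ideal.span ((S.image MvPolynomial.X : Finset (MvPolynomial α K)) : Set (MvPolynomial α K)) with hJ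
    have key : (Ideal.Quotient.mkₐ K J).comp (killVars K S) = Ideal.Quotient.mkₐ K J := by
      apply MvPolynomial.algHom_ext
      intro v
      by_cases h : v ∈ S
      · have : (MvPolynomial.X v : MvPolynomial α K) ∈ J :=
          Ideal.subset_span (by simpa using h)
        have h2 : Ideal.Quotient.mk J (MvPolynomial.X v) = 0 := Ideal.Quotient.eq_zero_iff_mem.2 this
        simp [killVars, h, h2]
      · simp [killVars, h]
    have h1 := congrArg (fun f => f p) key
    have h0 : killVars K S p = 0 := hp
    simp only [AlgHom.comp_apply, h0, map_zero] at h1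
    exact Ideal.Quotient.eq_zero_iff_mem.1 h1.symm
  · rw [Ideal.span_le]
    intro x hx
    simp only [coe_image, Set.mem_image] at hx
    obtain ⟨v, hv, rfl⟩ := hx
    exact (X_mem_coverIdeal K S v).2 hv

lemma coverIdeal_le_iff (S : Finset α) (J : Ideal (MvPolynomial α K)) :
    coverIdeal K S ≤ J ↔ ∀ v ∈ S, MvPolynomial.X v ∈ J := by
  rw [coverIdeal_eq_span, Ideal.span_le]
  simp [Set.subset_def]

lemma card_le_height (S : Finset α) : (S.card : ℕ∞) ≤ (coverIdeal K S).height := by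
  induction S using Finset.induction_on with
  | empty => simp
  | insert a S ha ih =>
    rw [Finset.card_insert_of_notMem ha]
    push_cast
    refine (add_le_add_left ih 1).trans (Ideal.height_add_one_le_of_lt_of_isPrime ?_)
    refine lt_of_le_not_ge ?_ ?_
    · rw [coverIdeal_le_iff]
      intro v hv
      rw [X_mem_coverIdeal]; simp [hv]
    · rw [coverIdeal_le_iff]
      intro h
      exact ha ((X_mem_coverIdeal K S a).1 (h a (by simp)))

lemma height_coverIdeal [Finite α] (S : Finset α) : (coverIdeal K S).height = S.card := by
  classical
  refine le_antisymm ?_ (card_le_height K S)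
  have : coverIdeal K S ∈ (Ideal.span
      ((S.image MvPolynomial.X : Finset (MvPolynomial α K)) : Set _)).minimalPrimes := by
    rw [← coverIdeal_eq_span, Ideal.minimalPrimes_eq_subsingleton_self]
    simp
  refine (Ideal.height_le_card_of_mem_minimalPrimes_span_finset this).trans ?_
  exact_mod_cast Finset.card_image_le

variable {t s : ℕ} (Vs : Fin t → Finset α)

lemma edgeIdeal_le_cover (hs : 2 ≤ s) (hst : s ≤ t)
    (T : Finset (Fin t)) (hT : T.card = t - s + 1) :
    edgeIdeal K Vs s ≤ coverIdeal K (T.biUnion Vs) := by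
  unfold edgeIdeal
  rw [Ideal.span_le]
  rintro _ ⟨e, ⟨he, hc, h1⟩, rfl⟩
  have hex : ∀ v ∈ e, ∃ i, v ∈ Vs i := by
    intro v hv
    simpa [vertexSet] using he hv
  suffices h : ∃ v ∈ e, v ∈ T.biUnion Vs by
    obtain ⟨v, hv, hvT⟩ := h
    exact Ideal.mem_of_dvd _ (Finset.dvd_prod_of_mem _ hv) ((X_mem_coverIdeal K _ v).2 hvT)
  by_contra! hno
  have hFt : Nonempty (Fin t) := by
    obtain ⟨i, _⟩ := Finset.card_pos.1 (show 0 < T.card by omega)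
    exact ⟨i⟩
  choose! f hf using hex
  have hcard : e.card ≤ (Tᶜ).card := by
    refine Finset.card_le_card_of_injOn f ?_ ?_
    · intro v hv
      simp only [coe_compl, Set.mem_compl_iff, mem_coe]
      intro hT
      exact hno v hv (Finset.mem_biUnion.2 ⟨_, hT, hf v hv⟩)
    · intro v hv w hw hvw
      refine Finset.card_le_one.1 (h1 (f v)) v ?_ w ?_
      · exact Finset.mem_inter.2 ⟨hv, hf v hv⟩
      · exact Finset.mem_inter.2 ⟨hw, hvw ▸ hf w hw⟩
  rw [Finset.card_compl, Fintype.card_fin] at hcard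
  omega

lemma exists_cover_le (hs : 2 ≤ s) (hst : s ≤ t)
    (hdisj : ∀ i j : Fin t, i ≠ j → Disjoint (Vs i) (Vs j))
    (q : Ideal (MvPolynomial α K)) [hq : q.IsPrime] (hI : edgeIdeal K Vs s ≤ q) :
    ∃ T : Finset (Fin t), T.card = t - s + 1 ∧ coverIdeal K (T.biUnion Vs) ≤ q := by
  classical
  let G : Finset (Fin t) := Finset.univ.filter
    (fun i => ∃ v ∈ Vs i, (MvPolynomial.X v : MvPolynomial α K) ∉ q)
  have hG : G.card < s := by
    by_contra! hG
    obtain ⟨A, hAG, hA⟩ := Finset.exists_subset_card_eq hG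
    have hex : ∀ i ∈ A, ∃ v ∈ Vs i, (MvPolynomial.X v : MvPolynomial α K) ∉ q := by
      intro i hi
      exact (Finset.mem_filter.1 (hAG hi)).2
    have hα : Nonempty α := by
      obtain ⟨i, hi⟩ := Finset.card_pos.1 (show 0 < A.card by omega)
      exact ⟨(hex i hi).choose⟩
    choose! f hf hfq using hex
    have hidx : ∀ i ∈ A, ∀ j, f i ∈ Vs j → i = j := by
      intro i hi j hj
      by_contra hne
      exact Finset.disjoint_left.1 (hdisj i j hne) (hf i hi) hj
    have hinj : Set.InjOn f A := by
      intro i hi j hj hij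
      exact hidx i hi j (hij ▸ hf j hj)
    have hedge : IsEdge Vs s (A.image f) := by
      refine ⟨?_, ?_, ?_⟩
      · intro v hv
        obtain ⟨i, hi, rfl⟩ := Finset.mem_image.1 hv
        simpa [vertexSet] using ⟨i, hf i hi⟩
      · rw [Finset.card_image_of_injOn hinj, hA]
      · intro j
        rw [Finset.card_le_one]
        intro v hv w hw
        simp only [mem_inter, mem_image] at hv hw
        obtain ⟨⟨a, ha, rfl⟩, hv⟩ := hv
        obtain ⟨⟨b, hb, rfl⟩, hw⟩ := hw
        rw [hidx a ha j hv, hidx b hb j hw]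
    have hmem : (∏ v ∈ A.image f, MvPolynomial.X v : MvPolynomial α K) ∈ q :=
      hI (Ideal.subset_span ⟨_, hedge, rfl⟩)
    rw [hq.prod_mem_iff] at hmem
    obtain ⟨v, hv, hvq⟩ := hmem
    obtain ⟨i, hi, rfl⟩ := Finset.mem_image.1 hv
    exact hfq i hi hvq
  have hGc : t - s + 1 ≤ (Gᶜ).card := by
    rw [Finset.card_compl, Fintype.card_fin]
    omega
  obtain ⟨T, hTG, hT⟩ := Finset.exists_subset_card_eq hGc
  refine ⟨T, hT, ?_⟩
  rw [coverIdeal_le_iff]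
  intro v hv
  obtain ⟨i, hi, hvi⟩ := Finset.mem_biUnion.1 hv
  have := hTG hi
  simp only [G, mem_compl, mem_filter, mem_univ, true_and] at this
  push Not at this
  exact this v hvi

lemma mem_minimalPrimes_cover (hs : 2 ≤ s) (hst : s ≤ t)
    (hdisj : ∀ i j : Fin t, i ≠ j → Disjoint (Vs i) (Vs j))
    (hne : ∀ i : Fin t, (Vs i).Nonempty)
    (T : Finset (Fin t)) (hT : T.card = t - s + 1) :
    coverIdeal K (T.biUnion Vs) ∈ (edgeIdeal K Vs s).minimalPrimes := by
  refine ⟨⟨inferInstance, edgeIdeal_le_cover K Vs hs hst T hT⟩, ?_⟩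
  rintro q ⟨hq, hIq⟩ hle
  obtain ⟨T', hT', hle'⟩ := exists_cover_le K Vs hs hst hdisj q hIq
  have hsub : T' ⊆ T := by
    intro i hi
    obtain ⟨v, hv⟩ := hne i
    have h1 := (coverIdeal_le_iff K _ _).1 (hle'.trans hle) v (Finset.mem_biUnion.2 ⟨i, hi, hv⟩)
    rw [X_mem_coverIdeal] at h1
    obtain ⟨j, hj, hvj⟩ := Finset.mem_biUnion.1 h1
    by_cases hij : i = j
    · exact hij ▸ hj
    · exact absurd hvj (Finset.disjoint_left.1 (hdisj i j hij) hv)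
  have : T' = T := Finset.eq_of_subset_of_card_le hsub (by omega)
  exact this ▸ hle'

lemma height_cover_biUnion [Finite α]
    (hdisj : ∀ i j : Fin t, i ≠ j → Disjoint (Vs i) (Vs j)) (T : Finset (Fin t)) :
    (coverIdeal K (T.biUnion Vs)).height = ((∑ i ∈ T, (Vs i).card : ℕ) : ℕ∞) := by
  rw [height_coverIdeal, Finset.card_biUnion (fun i _ j _ h => hdisj i j h)]

end aux

/-- The edge ideal of the complete `s`-uniform `t`-partite hypergraph
is unmixed (all primes minimal over it have the same height) if and only if the
hypergraph is `m`-balanced for some `m ≥ 1`. -/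
theorem unmixed_iff_balanced
    (K : Type*) [Field K] {α : Type*} [DecidableEq α] [Fintype α] {t s : ℕ}
    (hs : 2 ≤ s) (hst : s ≤ t)
    (Vs : Fin t → Finset α)
    (hdisj : ∀ i j : Fin t, i ≠ j → Disjoint (Vs i) (Vs j))
    (hne : ∀ i : Fin t, (Vs i).Nonempty)
    (huniv : vertexSet Vs = Finset.univ) :
    (∀ p q : PrimeSpectrum (MvPolynomial α K),
        p.asIdeal ∈ (edgeIdeal K Vs s).minimalPrimes →
        q.asIdeal ∈ (edgeIdeal K Vs s).minimalPrimes →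
        Order.height p = Order.height q) ↔
      ∃ m : ℕ, 1 ≤ m ∧ ∀ i : Fin t, (Vs i).card = m := by
  have hmin : ∀ p : PrimeSpectrum (MvPolynomial α K),
      p.asIdeal ∈ (edgeIdeal K Vs s).minimalPrimes →
      ∃ T : Finset (Fin t), T.card = t - s + 1 ∧
        Order.height p = ((∑ i ∈ T, (Vs i).card : ℕ) : ℕ∞) := by
    intro p hp
    obtain ⟨T, hT, hle⟩ := exists_cover_le K Vs hs hst hdisj p.asIdeal hp.1.2
    refine ⟨T, hT, ?_⟩
    have heq : p.asIdeal = coverIdeal K (T.biUnion Vs) :=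
      le_antisymm (hp.2 ⟨inferInstance, edgeIdeal_le_cover K Vs hs hst T hT⟩ hle) hle
    rw [← PrimeSpectrum.height_eq_orderHeight, heq, height_cover_biUnion K Vs hdisj]
  constructor
  · intro h
    have hsum : ∀ T T' : Finset (Fin t), T.card = t - s + 1 → T'.card = t - s + 1 →
        ∑ i ∈ T, (Vs i).card = ∑ i ∈ T', (Vs i).card := by
      intro T T' hT hT'
      have := h ⟨coverIdeal K (T.biUnion Vs), inferInstance⟩
        ⟨coverIdeal K (T'.biUnion Vs), inferInstance⟩
        (mem_minimalPrimes_cover K Vs hs hst hdisj hne T hT)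
        (mem_minimalPrimes_cover K Vs hs hst hdisj hne T' hT')
      rw [← PrimeSpectrum.height_eq_orderHeight, ← PrimeSpectrum.height_eq_orderHeight] at this
      simp only [height_cover_biUnion K Vs hdisj] at this
      exact_mod_cast this
    have heq : ∀ i j : Fin t, (Vs i).card = (Vs j).card := by
      intro i j
      by_cases hij : i = j
      · rw [hij]
      have hc : t - s ≤ ((Finset.univ.erase i).erase j).card := by
        rw [Finset.card_erase_of_mem (by simp [Ne.symm hij]), Finset.card_erase_of_mem (by simp)]
        simp only [card_univ, Fintype.card_fin]
        omega
      obtain ⟨U, hU, hUc⟩ := Finset.exists_subset_card_eq hc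
      have hi : i ∉ U := fun hi => by simpa using hU hi
      have hj : j ∉ U := fun hj => by simpa using hU hj
      have := hsum (insert i U) (insert j U)
        (by rw [Finset.card_insert_of_notMem hi, hUc])
        (by rw [Finset.card_insert_of_notMem hj, hUc])
      rw [Finset.sum_insert hi, Finset.sum_insert hj] at this
      omega
    exact ⟨(Vs ⟨0, by omega⟩).card, (hne _).card_pos, fun i => heq i _⟩
  · rintro ⟨m, -, hm⟩ p q hp hq
    obtain ⟨T, hT, hpT⟩ := hmin p hp
    obtain ⟨T', hT', hqT⟩ := hmin q hq
    rw [hpT, hqT]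
    simp [hm, hT, hT']
end

section
/- Let H be the complete s-uniform t-partite hypergraph with sides V_1, …, V_t, and let I(H) be its edge ideal in R = K[x_v : v ∈ V]. Then the minimal number of generators of I(H) (the least cardinality of a generating set) equals the height of I(H) if and only if s = t and |V_i| = 1 for every i, i.e., if and only if H has exactly one edge. -/
open Finset

/-- The minimal number of generators of an ideal: the least cardinality of a (finite)
generating set. -/
noncomputable def minNumGens {R : Type*} [CommRing R] (I : Ideal R) : ℕ :=
  sInf {n : ℕ | ∃ G : Finset R, G.card = n ∧ Ideal.span (G : Set R) = I}

lemma edge_lower {K : Type*} [Field K] {α : Type*} [DecidableEq α] (E : Finset (α →₀ ℕ)) (s : ℕ)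
    (hE : ∀ e ∈ E, e.degree = s) (G : Finset (MvPolynomial α K))
    (hG : Ideal.span (G : Set (MvPolynomial α K)) =
      Ideal.span ((fun e => MvPolynomial.monomial e (1 : K)) '' (E : Set (α →₀ ℕ)))) :
    E.card ≤ G.card := by
  classical
  let φ : MvPolynomial α K →ₗ[K] (E → K) := LinearMap.pi fun e => MvPolynomial.lcoeff K e.1
  have hφ : ∀ f (e : E), φ f e = MvPolynomial.coeff e.1 f := fun f e => rfl
  have key : ∀ a x, x ∈ Ideal.span (G : Set (MvPolynomial α K)) →
      φ (a * x) = MvPolynomial.coeff 0 a • φ x := by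
    intro a x hx
    rw [hG, MvPolynomial.mem_ideal_span_monomial_image] at hx
    ext e
    rw [Pi.smul_apply, hφ, hφ, MvPolynomial.coeff_mul, smul_eq_mul]
    rw [Finset.sum_eq_single (0, e.1)]
    · rintro ⟨u, w⟩ huw hne
      rw [Finset.HasAntidiagonal.mem_antidiagonal] at huw
      simp only at huw ⊢
      by_cases hw : MvPolynomial.coeff w x = 0
      · rw [hw, mul_zero]
      · exfalso
        obtain ⟨d, hd, hdw⟩ := hx w (MvPolynomial.mem_support_iff.2 hw)
        have h1 : u.degree + w.degree = s := by
          rw [← map_add, huw]; exact hE _ e.2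
        have h2 : d.degree ≤ w.degree := Finsupp.degree_mono hdw
        rw [hE d hd] at h2
        have h3 : u.degree = 0 := by omega
        rw [Finsupp.degree_eq_zero_iff] at h3
        subst h3
        rw [zero_add] at huw
        exact hne (by rw [huw])
    · intro h
      simp at h
  have hmem : ∀ f ∈ Ideal.span (G : Set (MvPolynomial α K)),
      φ f ∈ Submodule.span K ((G.image φ : Finset (E → K)) : Set (E → K)) := by
    intro f hf
    refine Submodule.span_induction (p := fun f _ => φ f ∈
      Submodule.span K ((G.image φ : Finset (E → K)) : Set (E → K))) ?_ ?_ ?_ ?_ hf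
    · intro x hx
      exact Submodule.subset_span (Finset.mem_coe.2 (Finset.mem_image_of_mem φ hx))
    · simp
    · intro x y _ _ hx hy
      rw [map_add]; exact add_mem hx hy
    · intro a x hx h
      rw [smul_eq_mul, key a x hx]
      exact Submodule.smul_mem _ _ h
  have htop : Submodule.span K ((G.image φ : Finset (E → K)) : Set (E → K)) = ⊤ := by
    rw [eq_top_iff, ← (Pi.basisFun K E).span_eq, Submodule.span_le]
    rintro _ ⟨e, rfl⟩
    have : Pi.basisFun K E e = φ (MvPolynomial.monomial e.1 1) := by
      ext d
      rw [hφ, MvPolynomial.coeff_monomial, Pi.basisFun_apply, Pi.single_apply]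
      simp only [Subtype.ext_iff, eq_comm]
    rw [this]
    apply hmem
    rw [hG]
    exact Ideal.subset_span ⟨e.1, e.2, rfl⟩
  have h1 := finrank_span_finset_le_card (R := K) (G.image φ)
  rw [Set.finrank, htop, finrank_top, Module.finrank_fintype_fun_eq_card, Fintype.card_coe] at h1
  exact h1.trans Finset.card_image_le

lemma idealHeight_eq {R : Type*} [CommRing R] (I : Ideal R) : idealHeight I = I.height := by
  rw [Ideal.height_eq_inf_minimalPrimes, idealHeight]
  apply le_antisymm
  · refine le_iInf₂ fun J hJ => ?_
    have := hJ.1.1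
    refine (iInf₂_le (⟨J, hJ.1.1⟩ : PrimeSpectrum R) hJ).trans ?_
    rw [← PrimeSpectrum.height_eq_orderHeight]
  · refine le_iInf₂ fun p hp => ?_
    refine (iInf₂_le p.asIdeal hp).trans ?_
    rw [← PrimeSpectrum.height_eq_orderHeight]

lemma edge_prod {K : Type*} [Field K] {α : Type*} (e : Finset α) :
    (∏ v ∈ e, MvPolynomial.X v : MvPolynomial α K) =
      MvPolynomial.monomial (∑ v ∈ e, Finsupp.single v 1) 1 := by
  rw [MvPolynomial.monomial_sum_one]; rfl

lemma ind_inj {α : Type*} [DecidableEq α] : Function.Injective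
    (fun e : Finset α => (∑ v ∈ e, Finsupp.single v 1 : α →₀ ℕ)) := by
  intro e f h
  ext v
  have := DFunLike.congr_fun h v
  simp only [Finsupp.finsetSum_apply, Finsupp.single_apply, Finset.sum_ite_eq'] at this
  by_cases h1 : v ∈ e <;> by_cases h2 : v ∈ f <;> simp_all

lemma cover_upper {K : Type*} [Field K] {α : Type*} [DecidableEq α] [Fintype α] {t s : ℕ}
    (Vs : Fin t → Finset α) (C : Finset α)
    (hC : ∀ e, IsEdge Vs s e → ∃ v ∈ e, v ∈ C) :
    (edgeIdeal K Vs s).height ≤ C.card := by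
  classical
  let G : Finset (MvPolynomial α K) := C.image MvPolynomial.X
  have hle : edgeIdeal K Vs s ≤ Ideal.span (G : Set (MvPolynomial α K)) := by
    rw [edgeIdeal, Ideal.span_le]
    rintro _ ⟨e, he, rfl⟩
    obtain ⟨v, hv, hvC⟩ := hC e he
    refine Ideal.mem_of_dvd _ (Finset.dvd_prod_of_mem _ hv) ?_
    exact Ideal.subset_span (Finset.mem_coe.2 (Finset.mem_image_of_mem _ hvC))
  have hne : Ideal.span (G : Set (MvPolynomial α K)) ≠ ⊤ := by
    intro h
    have h2 : Ideal.span (G : Set (MvPolynomial α K)) ≤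
        RingHom.ker (MvPolynomial.constantCoeff (σ := α) (R := K)) := by
      rw [Ideal.span_le]
      intro x hx
      obtain ⟨v, _, rfl⟩ := Finset.mem_image.1 (Finset.mem_coe.1 hx)
      simp [RingHom.mem_ker]
    rw [h] at h2
    have := h2 (Submodule.mem_top (x := 1))
    simp [RingHom.mem_ker] at this
  refine (Ideal.height_mono hle).trans ((Ideal.height_le_spanFinrank _ hne).trans ?_)
  refine (Submodule.spanFinrank_span_le_encard _).trans ?_
  rw [Set.encard_coe_eq_coe_finsetCard]
  exact_mod_cast Finset.card_image_le

lemma isEdge_image {α : Type*} [DecidableEq α] {t s : ℕ} (Vs : Fin t → Finset α)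
    (hdisj : ∀ i j : Fin t, i ≠ j → Disjoint (Vs i) (Vs j)) (r : Fin t → α)
    (hr : ∀ i, r i ∈ Vs i) (T : Finset (Fin t)) (hT : T.card = s) :
    IsEdge Vs s (T.image r) := by
  have hu : ∀ i j, r i ∈ Vs j → i = j := by
    intro i j h
    by_contra hij
    exact Finset.disjoint_left.1 (hdisj i j hij) (hr i) h
  refine ⟨?_, ?_, ?_⟩
  · intro x hx
    obtain ⟨i, _, rfl⟩ := Finset.mem_image.1 hx
    exact Finset.mem_biUnion.2 ⟨i, Finset.mem_univ _, hr i⟩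
  · rw [Finset.card_image_of_injective, hT]
    intro i j h
    exact hu i j (h ▸ hr j)
  · intro i
    rw [Finset.card_le_one]
    have : ∀ a ∈ T.image r ∩ Vs i, a = r i := by
      intro a ha
      obtain ⟨h1, h2⟩ := Finset.mem_inter.1 ha
      obtain ⟨j, _, rfl⟩ := Finset.mem_image.1 h1
      rw [hu j i h2]
    intro a ha b hb
    rw [this a ha, this b hb]

lemma exists_two {α : Type*} [DecidableEq α] {t s : ℕ} (hs : 2 ≤ s) (hst : s ≤ t)
    (Vs : Fin t → Finset α)
    (hdisj : ∀ i j : Fin t, i ≠ j → Disjoint (Vs i) (Vs j))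
    (hne : ∀ i : Fin t, (Vs i).Nonempty) (h : ¬ (s = t ∧ ∀ i : Fin t, (Vs i).card = 1)) :
    ∃ e f v, IsEdge Vs s e ∧ IsEdge Vs s f ∧ e ≠ f ∧ v ∈ e ∧ v ∈ f := by
  choose r hr using hne
  by_cases hlt : s = t
  · subst hlt
    push Not at h
    obtain ⟨i, hi⟩ := h rfl
    obtain ⟨b, hb, hbr⟩ : ∃ b ∈ Vs i, b ≠ r i := by
      apply Finset.exists_mem_ne
      have := Finset.card_pos.2 ⟨_, hr i⟩
      omega
    have hr' : ∀ j, Function.update r i b j ∈ Vs j := by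
      intro j
      by_cases hj : j = i
      · subst hj; simpa using hb
      · simpa [hj] using hr j
    obtain ⟨k, hk⟩ : ∃ k : Fin s, k ≠ i := by
      have : Nontrivial (Fin s) := Fin.nontrivial_iff_two_le.2 hs
      exact exists_ne i
    refine ⟨_, _, r k, isEdge_image Vs hdisj r hr Finset.univ (by simp),
      isEdge_image Vs hdisj _ hr' Finset.univ (by simp), ?_, by simp, ?_⟩
    · intro heq
      have : b ∈ Finset.univ.image r := by
        rw [heq]
        exact Finset.mem_image.2 ⟨i, Finset.mem_univ _, by simp⟩
      obtain ⟨j, _, rfl⟩ := Finset.mem_image.1 this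
      by_cases hj : j = i
      · subst hj; exact hbr rfl
      · exact Finset.disjoint_left.1 (hdisj j i hj) (hr j) hb
    · exact Finset.mem_image.2 ⟨k, Finset.mem_univ _, by simp [hk]⟩
  · obtain ⟨T, -, hT⟩ := Finset.exists_subset_card_eq (s := (Finset.univ : Finset (Fin t)))
      (n := s + 1) (by simp; omega)
    obtain ⟨i, j, k, hi, hj, hk, hij, hik, hjk⟩ := Finset.two_lt_card_iff.1 (show 2 < T.card by omega)
    refine ⟨_, _, r k, isEdge_image Vs hdisj r hr (T.erase i) (by rw [card_erase_of_mem hi]; omega),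
      isEdge_image Vs hdisj r hr (T.erase j) (by rw [card_erase_of_mem hj]; omega), ?_,
      Finset.mem_image_of_mem _ (by simp [hk, hik.symm]),
      Finset.mem_image_of_mem _ (by simp [hk, hjk.symm])⟩
    intro heq
    have : r i ∈ (T.erase i).image r := by
      rw [heq]; exact Finset.mem_image_of_mem _ (by simp [hi, hij])
    obtain ⟨l, hl, hlr⟩ := Finset.mem_image.1 this
    have hli := (Finset.mem_erase.1 hl).1
    exact Finset.disjoint_left.1 (hdisj l i hli) (hr l) (hlr ▸ hr i)

/-- The minimal number of generators of the edge ideal of the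
complete `s`-uniform `t`-partite hypergraph equals its height (i.e. the edge ideal is
a complete intersection) if and only if `s = t` and every side is a singleton, i.e.
the hypergraph has exactly one edge. -/
theorem complete_intersection_iff_one_edge
    (K : Type*) [Field K] {α : Type*} [DecidableEq α] [Fintype α] {t s : ℕ}
    (hs : 2 ≤ s) (hst : s ≤ t)
    (Vs : Fin t → Finset α)
    (hdisj : ∀ i j : Fin t, i ≠ j → Disjoint (Vs i) (Vs j))
    (hne : ∀ i : Fin t, (Vs i).Nonempty)
    (huniv : vertexSet Vs = Finset.univ) :
    (minNumGens (edgeIdeal K Vs s) : ℕ∞) = idealHeight (edgeIdeal K Vs s) ↔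
      s = t ∧ ∀ i : Fin t, (Vs i).card = 1 := by
  classical
  rw [idealHeight_eq]
  constructor
  · intro heq
    by_contra hcon
    obtain ⟨e, f, v, he, hf, hef, hve, hvf⟩ := exists_two hs hst Vs hdisj hne hcon
    let E : Finset (Finset α) := Finset.univ.filter (IsEdge Vs s)
    have hE : ∀ g, g ∈ E ↔ IsEdge Vs s g := by simp [E]
    let ind : Finset α → (α →₀ ℕ) := fun e => ∑ v ∈ e, Finsupp.single v 1
    have hI : edgeIdeal K Vs s = Ideal.span ((fun e => MvPolynomial.monomial e (1 : K)) ''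
        ((E.image ind : Finset (α →₀ ℕ)) : Set (α →₀ ℕ))) := by
      rw [edgeIdeal]
      congr 1
      ext m
      constructor
      · rintro ⟨g, hg, rfl⟩
        exact ⟨ind g, Finset.mem_coe.2 (Finset.mem_image_of_mem _ ((hE g).2 hg)),
          (edge_prod g).symm⟩
      · rintro ⟨_, hd, rfl⟩
        obtain ⟨g, hg, rfl⟩ := Finset.mem_image.1 (Finset.mem_coe.1 hd)
        exact ⟨g, (hE g).1 hg, (edge_prod g).symm⟩
    have hmem := Nat.sInf_mem (s := {n : ℕ | ∃ G : Finset (MvPolynomial α K), G.card = n ∧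
      Ideal.span (G : Set (MvPolynomial α K)) = edgeIdeal K Vs s})
      ⟨_, (E.image ind).image (fun e => MvPolynomial.monomial e (1 : K)), rfl, by
        rw [hI, Finset.coe_image]⟩
    obtain ⟨G, hGc, hG⟩ := hmem
    change G.card = minNumGens (edgeIdeal K Vs s) at hGc
    have hlow := edge_lower (E.image ind) s (by
      intro d hd
      obtain ⟨g, hg, rfl⟩ := Finset.mem_image.1 hd
      simp only [ind, map_sum, Finsupp.degree_single, Finset.sum_const, smul_eq_mul, mul_one]
      exact ((hE g).1 hg).2.1) G (hG.trans hI)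
    rw [Finset.card_image_of_injective _ ind_inj, hGc] at hlow
    have hex : ∀ g, ∃ w, (IsEdge Vs s g → w ∈ g) ∧ (g = e → w = v) := by
      intro g
      by_cases hge : g = e
      · exact ⟨v, fun _ => hge ▸ hve, fun _ => rfl⟩
      · by_cases hg : g.Nonempty
        · exact ⟨hg.choose, fun _ => hg.choose_spec, fun h => absurd h hge⟩
        · refine ⟨v, fun h => ?_, fun _ => rfl⟩
          exact absurd (Finset.card_pos.1 (by have := h.2.1; omega)) hg
    choose p hp hpe using hex
    have hup := cover_upper (K := K) (s := s) Vs ((E.erase f).image p) (by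
      intro g hg
      by_cases hgf : g = f
      · subst hgf
        exact ⟨v, hvf, Finset.mem_image.2 ⟨e, Finset.mem_erase.2 ⟨hef, (hE e).2 he⟩, hpe e rfl⟩⟩
      · exact ⟨p g, hp g hg, Finset.mem_image_of_mem _
          (Finset.mem_erase.2 ⟨hgf, (hE g).2 hg⟩)⟩)
    rw [← heq] at hup
    have h1 : minNumGens (edgeIdeal K Vs s) ≤ ((E.erase f).image p).card := by exact_mod_cast hup
    have h2 := h1.trans Finset.card_image_le
    have h3 := Finset.card_erase_lt_of_mem ((hE f).2 hf)
    omega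
  · rintro ⟨rfl, h1⟩
    have hcard : (Finset.univ : Finset α).card = s := by
      rw [← huniv, vertexSet, Finset.card_biUnion (fun i _ j _ hij => hdisj i j hij)]
      simp [h1]
    have hedge : ∀ e, IsEdge Vs s e ↔ e = Finset.univ := by
      intro e
      constructor
      · intro h
        exact Finset.eq_univ_of_card _ (by rw [h.2.1, ← hcard, Finset.card_univ])
      · rintro rfl
        exact ⟨by rw [huniv], hcard, fun i => by rw [Finset.univ_inter, h1]⟩
    let m : MvPolynomial α K := ∏ v, MvPolynomial.X v
    have hI : edgeIdeal K Vs s = Ideal.span {m} := by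
      rw [edgeIdeal]
      congr 1
      ext x
      simp [hedge, m]
    have hm0 : m ≠ 0 := Finset.prod_ne_zero_iff.2 fun v _ => MvPolynomial.X_ne_zero v
    have hmu : ¬ IsUnit m := by
      intro h
      have h2 := h.map (MvPolynomial.constantCoeff (σ := α) (R := K))
      have : (Finset.univ : Finset α).card ≠ 0 := by omega
      simp only [m, map_prod, MvPolynomial.constantCoeff_X, Finset.prod_const] at h2
      rw [zero_pow this] at h2
      exact not_isUnit_zero h2
    rw [hI, Ideal.height_span_singleton_eq_one_of_mem_nonZeroDivisors
      (mem_nonZeroDivisors_of_ne_zero hm0) hmu]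
    have hmem : 1 ∈ {n : ℕ | ∃ G : Finset (MvPolynomial α K), G.card = n ∧
      Ideal.span (G : Set (MvPolynomial α K)) = Ideal.span {m}} := ⟨{m}, by simp, by simp⟩
    have hle : minNumGens (Ideal.span {m}) ≤ 1 := Nat.sInf_le hmem
    obtain ⟨G, hGc, hG⟩ := Nat.sInf_mem ⟨1, hmem⟩
    change G.card = minNumGens (Ideal.span {m}) at hGc
    have hne0 : minNumGens (Ideal.span {m}) ≠ 0 := by
      intro h0
      rw [h0, Finset.card_eq_zero] at hGc
      subst hGc
      rw [Finset.coe_empty, Ideal.span_empty, eq_comm, Ideal.span_singleton_eq_bot] at hG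
      exact hm0 hG
    have : minNumGens (Ideal.span {m}) = 1 := by omega
    rw [this]; rfl
end
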